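/- Every b-complete idempotent semifield is commutative under multiplication. -/

import Mathlib

/-- An idempotent commutative semigroup. -/
structure IdemSemigroup (S : Type*) where
  add : S → S → S
  add_comm : ∀ x y, add x y = add y x
  add_assoc : ∀ x y z, add (add x y) z = add x (add y z)
  add_idem : ∀ x, add x x = x

namespace IdemSemigroup
variable {S : Type*}

/-- The canonical order: x ≼ y iff x ⊕ y = y. -/
def le (A : IdemSemigroup S) (x y : S) : Prop := A.add x y = y
def UB (A : IdemSemigroup S) (X : Set S) (b : S) : Prop := ∀ x ∈ X, A.le x b
def LB (A : IdemSemigroup S) (X : Set S) (b : S) : Prop := ∀ x ∈ X, A.le b x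
def IsSup (A : IdemSemigroup S) (X : Set S) (s : S) : Prop :=
  A.UB X s ∧ ∀ b, A.UB X b → A.le s b
def IsInf (A : IdemSemigroup S) (X : Set S) (s : S) : Prop :=
  A.LB X s ∧ ∀ b, A.LB X b → A.le b s
/-- b-completeness: every subset bounded above (including ∅) has a least upper bound. -/
def BComplete (A : IdemSemigroup S) : Prop :=
  ∀ X : Set S, (∃ b, A.UB X b) → ∃ s, A.IsSup X s
/-- Linearly ordered subset. -/
def Chain (A : IdemSemigroup S) (X : Set S) : Prop :=
  ∀ x ∈ X, ∀ y ∈ X, A.le x y ∨ A.le y x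

end IdemSemigroup

/-- An idempotent semifield: idempotent semiring with all nonzero elements invertible. -/
structure IdemSemifield (K : Type*) extends IdemSemigroup K where
  mul : K → K → K
  one : K
  zero : K
  mul_assoc : ∀ x y z, mul (mul x y) z = mul x (mul y z)
  one_mul : ∀ x, mul one x = x
  mul_one : ∀ x, mul x one = x
  zero_add : ∀ x, add zero x = x
  zero_mul : ∀ x, mul zero x = zero
  mul_zero : ∀ x, mul x zero = zero
  left_distrib : ∀ x y z, mul x (add y z) = add (mul x y) (mul x z)
  right_distrib : ∀ x y z, mul (add x y) z = add (mul x z) (mul y z)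
  inv_exists : ∀ x, x ≠ zero → ∃ y, mul x y = one ∧ mul y x = one

namespace IdemSemifield
variable {K : Type*}
def BComplete (F : IdemSemifield K) : Prop := F.toIdemSemigroup.BComplete
def pow (F : IdemSemifield K) (x : K) : ℕ → K
  | 0 => F.one
  | n + 1 => F.mul x (F.pow x n)
/-- Algebraically closed: n-th roots exist. -/
def AlgClosed (F : IdemSemifield K) : Prop :=
  ∀ x : K, ∀ n : ℕ, 0 < n → ∃ y, F.pow y n = x
end IdemSemifield

/-- An idempotent semimodule over an idempotent semifield. -/
structure IdemSemimodule {K : Type*} (F : IdemSemifield K) (V : Type*) extends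
    IdemSemigroup V where
  smul : K → V → V
  zero : V
  zero_add : ∀ x, add zero x = x
  smul_smul : ∀ a b x, smul a (smul b x) = smul (F.mul a b) x
  add_smul : ∀ a b x, smul (F.add a b) x = add (smul a x) (smul b x)
  smul_add : ∀ a x y, smul a (add x y) = add (smul a x) (smul a y)
  zero_smul : ∀ x, smul F.zero x = zero
  one_smul : ∀ x, smul F.one x = x

/-- An idempotent b-space: b-complete semimodule, scalar multiplication compatible
with bounded sups and infs of scalars. -/
structure IdemBSpace {K : Type*} (F : IdemSemifield K) (V : Type*) extends
    IdemSemimodule F V where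
  bcomplete : toIdemSemigroup.BComplete
  smul_sup : ∀ (Q : Set K) (x : V) (s : K), Q.Nonempty →
    F.toIdemSemigroup.IsSup Q s →
    toIdemSemigroup.IsSup ((fun a => smul a x) '' Q) (smul s x)
  smul_inf : ∀ (Q : Set K) (x : V) (s : K), Q.Nonempty →
    (∃ b, F.toIdemSemigroup.UB Q b) →
    F.toIdemSemigroup.IsInf Q s →
    toIdemSemigroup.IsInf ((fun a => smul a x) '' Q) (smul s x)

namespace IdemBSpace
variable {K V : Type*} {F : IdemSemifield K}

def le (B : IdemBSpace F V) (x y : V) : Prop := B.toIdemSemigroup.le x y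
def IsSup (B : IdemBSpace F V) (X : Set V) (s : V) : Prop := B.toIdemSemigroup.IsSup X s
def IsInf (B : IdemBSpace F V) (X : Set V) (s : V) : Prop := B.toIdemSemigroup.IsInf X s
def Chain (B : IdemBSpace F V) (X : Set V) : Prop := B.toIdemSemigroup.Chain X

def Subspace (B : IdemBSpace F V) (W : Set V) : Prop :=
  (∀ x ∈ W, ∀ y ∈ W, B.add x y ∈ W) ∧ (∀ (a : K), ∀ x ∈ W, B.smul a x ∈ W)

/-- wo-closed: sups of bounded linearly ordered subsets and infs of nonempty linearly
ordered subsets (taken in V) belong to the set. -/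
def WOClosed (B : IdemBSpace F V) (M : Set V) : Prop :=
  ∀ X ⊆ M, B.Chain X →
    (∀ s, B.IsSup X s → s ∈ M) ∧ (∀ s, X.Nonempty → B.IsInf X s → s ∈ M)

/-- Archimedean element. -/
def ArchElem (B : IdemBSpace F V) (x : V) : Prop :=
  ∀ y, ∃ a : K, B.le y (B.smul a x)

/-- f is the functional x*: x*(y) = inf { k | k ⊙ x ≽ y }. -/
def IsStar (B : IdemBSpace F V) (x : V) (f : V → K) : Prop :=
  ∀ y, F.toIdemSemigroup.IsInf {k | B.le y (B.smul k x)} (f y)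

/-- wo-continuity of the functional f: it preserves sups and infs of bounded
linearly ordered subsets. -/
def WOContStar (B : IdemBSpace F V) (f : V → K) : Prop :=
  (∀ X : Set V, B.Chain X → ∀ s, B.IsSup X s → F.toIdemSemigroup.IsSup (f '' X) (f s)) ∧
  (∀ X : Set V, B.Chain X → X.Nonempty → ∀ s, B.IsInf X s →
    F.toIdemSemigroup.IsInf (f '' X) (f s))

/-- wo-continuous element: its star functional is wo-continuous. -/
def WOContElem (B : IdemBSpace F V) (x : V) : Prop :=
  ∃ f, B.IsStar x f ∧ B.WOContStar f

/-- Archimedean space: contains a wo-continuous Archimedean element. -/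
def ArchSpace (B : IdemBSpace F V) : Prop :=
  ∃ x, B.ArchElem x ∧ B.WOContElem x

/-- The subspace W, with the induced structure, is an Archimedean space. -/
def ArchOn (B : IdemBSpace F V) (W : Set V) : Prop :=
  ∃ x ∈ W, (∀ y ∈ W, ∃ a : K, B.le y (B.smul a x)) ∧
    ∃ f : V → K,
      (∀ y ∈ W, F.toIdemSemigroup.IsInf {k | B.le y (B.smul k x)} (f y)) ∧
      (∀ X ⊆ W, B.Chain X → ∀ s ∈ W, B.IsSup X s →
        F.toIdemSemigroup.IsSup (f '' X) (f s)) ∧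
      (∀ X ⊆ W, B.Chain X → X.Nonempty → ∀ s ∈ W, B.IsInf X s →
        F.toIdemSemigroup.IsInf (f '' X) (f s))

/-- b-linear map of the space into itself. -/
def BLinearMap (B : IdemBSpace F V) (g : V → V) : Prop :=
  (∀ x y, g (B.add x y) = B.add (g x) (g y)) ∧
  (∀ (a : K) x, g (B.smul a x) = B.smul a (g x)) ∧
  (∀ (X : Set V) s, B.IsSup X s → B.IsSup (g '' X) (g s))

/-- b-linear functional. -/
def BLinearFun (B : IdemBSpace F V) (f : V → K) : Prop :=
  (∀ x y, f (B.add x y) = F.add (f x) (f y)) ∧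
  (∀ (a : K) x, f (B.smul a x) = F.mul a (f x)) ∧
  (∀ (X : Set V) s, B.IsSup X s → F.toIdemSemigroup.IsSup (f '' X) (f s))

/-- ∧-subspace: closed under scalar multiplication and infima of nonempty subsets. -/
def WedgeSub (B : IdemBSpace F V) (W : Set V) : Prop :=
  (∀ (a : K), ∀ x ∈ W, B.smul a x ∈ W) ∧
  (∀ X ⊆ W, X.Nonempty → ∃ s ∈ W, (∀ x ∈ X, B.le s x) ∧
    ∀ b ∈ W, (∀ x ∈ X, B.le b x) → B.le b s)

end IdemBSpace

/-- Bounded upper semicontinuous maps X → K. -/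
def USCset {K : Type*} (F : IdemSemifield K) (X : Type*) [TopologicalSpace X] :
    Set (X → K) :=
  {f | (∃ b, ∀ t, F.toIdemSemigroup.le (f t) b) ∧
    ∀ b, IsClosed {t | F.toIdemSemigroup.le b (f t)}}

/-!
In an Archimedean lattice-ordered group the powers of an element disjoint from its conjugate by
`g ≥ 1` are bounded by `g`, so such an element is trivial and disjointness survives conjugation.
Inequalities may therefore be handled as if the group were a product of totally ordered groups, one
coordinate at a time. Take `a, b ≥ 1` and suppose that `c = ⁅b, a⁆` exceeds `1` on some
coordinates. Where conjugation by `b` does not increase `c`, induction on `n` gives `c ^ n ≤ a`.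
Where it does not decrease `c`, induction gives `c ^ n * a ≤ b ^ m` as soon as `a ≤ b ^ m`. Both
contradict the Archimedean property, unless `b ^ m ≤ a` for all `m`, which makes `b` trivial there.

In a b-complete semifield the supremum `s` of the powers of `x` satisfies `s * x ≤ s`, so a unit `x`
with bounded powers is at most `1`.
-/

/-- The order of a monoid is integrally closed if an element whose powers have a common upper bound
is at most `1`. For lattice-ordered groups this is the usual Archimedean property; Mathlib's
`MulArchimedean` is far stronger, asking that every element greater than `1` be a strong unit. -/
class IsIntegrallyClosedOrder (M : Type*) [Monoid M] [LE M] : Prop where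
  le_one_of_forall_pow_le : ∀ x y : M, (∀ n : ℕ, x ^ n ≤ y) → x ≤ 1

lemma le_one_of_isLUB_range_pow {M : Type*} [Monoid M] [Preorder M] [MulLeftMono M]
    [MulRightMono M] {x s : M} (hx : IsUnit x) (hs : IsUnit s)
    (h : IsLUB (Set.range (x ^ · : ℕ → M)) s) : x ≤ 1 := by
  obtain ⟨u, rfl⟩ := hx
  obtain ⟨t, rfl⟩ := hs
  have hle : (t : M) ≤ t * ↑u⁻¹ := by
    refine h.2 (Set.forall_mem_range.2 fun n => ?_)
    calc (u : M) ^ n = (u : M) ^ (n + 1) * ↑u⁻¹ := by rw [pow_succ, Units.mul_inv_cancel_right]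
      _ ≤ t * ↑u⁻¹ := mul_le_mul_left (h.1 ⟨n + 1, rfl⟩) _
  calc (u : M) = ↑t⁻¹ * (t * u) := (t.inv_mul_cancel_left u).symm
    _ ≤ ↑t⁻¹ * (t * ↑u⁻¹ * u) := mul_le_mul_right (mul_le_mul_left hle _) _
    _ = 1 := by rw [Units.inv_mul_cancel_right, Units.inv_mul]

open scoped commutatorElement

lemma commutatorElement_mul_eq_conj {G : Type*} [Group G] (a b : G) : ⁅a, b⁆ * b = a * b * a⁻¹ := by
  rw [commutatorElement_def, inv_mul_cancel_right]

namespace LatticeOrderedGroup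

variable {G : Type*} [Group G] [Lattice G]

section Disjoint

variable {a b c x y : G}

lemma one_le_left_of_inf_eq_one (h : a ⊓ b = 1) : 1 ≤ a :=
  h ▸ inf_le_left

lemma one_le_right_of_inf_eq_one (h : a ⊓ b = 1) : 1 ≤ b :=
  h ▸ inf_le_right

lemma inf_eq_one_of_le_left (h : a ⊓ c = 1) (hx : 1 ≤ x) (hxa : x ≤ a) : x ⊓ c = 1 :=
  le_antisymm (h ▸ inf_le_inf_right c hxa) (le_inf hx (one_le_right_of_inf_eq_one h))

lemma inf_eq_one_of_le_right (h : a ⊓ c = 1) (hx : 1 ≤ x) (hxc : x ≤ c) : a ⊓ x = 1 := by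
  rw [inf_comm] at h ⊢
  exact inf_eq_one_of_le_left h hx hxc

variable [MulLeftMono G] [MulRightMono G]

lemma le_of_le_mul_of_inf_eq_one (h : c ⊓ a = 1) (hb : 1 ≤ b) (hc : c ≤ a * b) : c ≤ b :=
  calc c ≤ c * b ⊓ a * b := le_inf (le_mul_of_one_le_right' hb) hc
    _ = b := by rw [← inf_mul, h, one_mul]

lemma mul_inf_eq_one (ha : a ⊓ c = 1) (hb : b ⊓ c = 1) : a * b ⊓ c = 1 := by
  have ha₁ := one_le_left_of_inf_eq_one ha
  have hb₁ := one_le_left_of_inf_eq_one hb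
  have hc₁ := one_le_right_of_inf_eq_one ha
  have hle : a * b ⊓ c ≤ a :=
    calc a * b ⊓ c ≤ a * b ⊓ a * c := inf_le_inf_left _ (le_mul_of_one_le_left' ha₁)
      _ = a := by rw [← mul_inf, hb, mul_one]
  exact le_antisymm (ha ▸ le_inf hle inf_le_right) (le_inf (one_le_mul ha₁ hb₁) hc₁)

lemma pow_inf_eq_one (h : a ⊓ c = 1) (n : ℕ) : a ^ n ⊓ c = 1 := by
  induction n with
  | zero => simpa only [pow_zero, inf_eq_left] using one_le_right_of_inf_eq_one h
  | succ n ih => exact pow_succ a n ▸ mul_inf_eq_one ih h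

lemma conj_le_conj (g : G) (h : x ≤ y) : g * x * g⁻¹ ≤ g * y * g⁻¹ :=
  mul_le_mul_left (mul_le_mul_right h g) g⁻¹

lemma one_le_conj (g : G) (h : 1 ≤ x) : 1 ≤ g * x * g⁻¹ := by
  simpa only [mul_one, mul_inv_cancel] using conj_le_conj g h

lemma conj_inf (g a b : G) : g * (a ⊓ b) * g⁻¹ = g * a * g⁻¹ ⊓ g * b * g⁻¹ := by
  rw [mul_inf, inf_mul]

lemma oneLePart_conj (g a : G) : (g * a * g⁻¹)⁺ᵐ = g * a⁺ᵐ * g⁻¹ := by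
  simp only [oneLePart_def, mul_sup, sup_mul, mul_one, mul_inv_cancel]

lemma oneLePart_mul_le (a b : G) : (a * b)⁺ᵐ ≤ a⁺ᵐ * b⁺ᵐ :=
  sup_le (mul_le_mul' (le_oneLePart a) (le_oneLePart b))
    (one_le_mul (one_le_oneLePart a) (one_le_oneLePart b))

lemma le_of_inf_conj_eq_one (hx : 1 ≤ x) (h : y ⊓ x * y * x⁻¹ = 1) : y ≤ x :=
  le_of_le_mul_of_inf_eq_one h hx <| by
    simpa only [inv_mul_cancel_right] using le_mul_of_one_le_left' hx

end Disjoint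

/-- Representable lattice-ordered groups, the subdirect products of totally ordered groups. They are
encoded by a characterization: conjugating one of two disjoint elements leaves them disjoint. -/
class IsRepresentable (G : Type*) [Group G] [Lattice G] : Prop where
  conj_inf_eq_one : ∀ {a b : G} (g : G), a ⊓ b = 1 → g * a * g⁻¹ ⊓ b = 1

section IntegrallyClosed

variable [MulLeftMono G] [MulRightMono G] [IsIntegrallyClosedOrder G] {a b g : G}

-- The powers of `c = (g⁻¹ * a * g) ⊓ b` are disjoint from their conjugates by `g`, hence bounded
-- by `g`.
lemma inv_conj_inf_eq_one (hg : 1 ≤ g) (h : a ⊓ b = 1) : g⁻¹ * a * g ⊓ b = 1 := by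
  set c := g⁻¹ * a * g ⊓ b
  have hc : 1 ≤ c := by
    refine le_inf ?_ (one_le_right_of_inf_eq_one h)
    simpa only [inv_inv] using one_le_conj g⁻¹ (one_le_left_of_inf_eq_one h)
  have hca : g * c * g⁻¹ ≤ a :=
    calc g * c * g⁻¹ ≤ g * (g⁻¹ * a * g) * g⁻¹ := conj_le_conj g inf_le_left
      _ = a := by group
  have hdisj : g * c * g⁻¹ ⊓ c = 1 :=
    inf_eq_one_of_le_right (inf_eq_one_of_le_left h (one_le_conj g hc) hca) hc inf_le_right
  have hpow (n : ℕ) : c ^ n ≤ g := by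
    refine le_of_inf_conj_eq_one hg ?_
    rw [← conj_pow]
    refine pow_inf_eq_one ?_ n
    rw [inf_comm]
    exact pow_inf_eq_one hdisj n
  exact le_antisymm (IsIntegrallyClosedOrder.le_one_of_forall_pow_le c g hpow) hc

lemma conj_inf_eq_one_of_one_le (hg : 1 ≤ g) (h : a ⊓ b = 1) : g * a * g⁻¹ ⊓ b = 1 := by
  rw [inf_comm] at h
  calc g * a * g⁻¹ ⊓ b = g * (g⁻¹ * b * g ⊓ a) * g⁻¹ := by rw [conj_inf, inf_comm]; group
    _ = 1 := by rw [inv_conj_inf_eq_one hg h]; group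

instance : IsRepresentable G where
  conj_inf_eq_one {a b} g h := by
    have hneg : (g⁻ᵐ)⁻¹ * a * g⁻ᵐ ⊓ b = 1 := inv_conj_inf_eq_one (one_le_leOnePart g) h
    have hpos := conj_inf_eq_one_of_one_le (one_le_oneLePart g) hneg
    rw [← oneLePart_div_leOnePart g]
    simpa only [div_eq_mul_inv, mul_inv_rev, inv_inv, mul_assoc] using hpos

end IntegrallyClosed

/-- `LeOn w x y` says that `1 ≤ w` and that `x ≤ y` modulo the polar of `w`, that is, on every
coordinate where `1 < w` when `G` is represented as a subdirect product of totally ordered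
groups. -/
def LeOn (w x y : G) : Prop := (x / y)⁺ᵐ ⊓ w = 1

namespace LeOn

variable {w v x y z x' y' : G}

lemma one_le (h : LeOn w x y) : 1 ≤ w :=
  one_le_right_of_inf_eq_one h

lemma anti (h : LeOn w x y) (hv : 1 ≤ v) (hvw : v ≤ w) : LeOn v x y :=
  inf_eq_one_of_le_right h hv hvw

lemma oneLePart_self [MulLeftMono G] [MulRightMono G] (x : G) : LeOn x⁺ᵐ x⁺ᵐ x := by
  have hdiv : x⁺ᵐ / x = x⁻ᵐ := by
    rw [oneLePart_def, div_eq_mul_inv, sup_mul, mul_inv_cancel, one_mul, sup_comm, leOnePart_def]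
  rw [LeOn, hdiv, oneLePart_eq_self.2 (one_le_leOnePart x), inf_comm]
  exact oneLePart_inf_leOnePart_eq_one x

lemma mul_right (h : LeOn w x y) (z : G) : LeOn w (x * z) (y * z) := by
  rwa [LeOn, mul_div_mul_right_eq_div]

lemma eq_one (h : LeOn w w 1) : w = 1 := by
  have hw := h.one_le
  rwa [LeOn, div_one, oneLePart_eq_self.2 hw, inf_idem] at h

variable [MulRightMono G]

lemma of_le (hw : 1 ≤ w) (h : x ≤ y) : LeOn w x y := by
  rw [LeOn, oneLePart_eq_one.2 (div_le_one'.2 h), inf_eq_left.2 hw]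

variable [MulLeftMono G]

lemma trans (hxy : LeOn w x y) (hyz : LeOn w y z) : LeOn w x z := by
  refine inf_eq_one_of_le_left (mul_inf_eq_one hxy hyz) (one_le_oneLePart _) ?_
  simpa only [div_mul_div_cancel] using oneLePart_mul_le (x / y) (y / z)

lemma anti_self (h : LeOn w w x) (hv : 1 ≤ v) (hvw : v ≤ w) : LeOn v v x :=
  (of_le hv hvw).trans (h.anti hv hvw)

lemma trans_le (hxy : LeOn w x y) (hyz : y ≤ z) : LeOn w x z :=
  hxy.trans (.of_le hxy.one_le hyz)

lemma of_le_oneLePart_div (hw : 1 ≤ w) (h : w ≤ (y / x)⁺ᵐ) : LeOn w x y := by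
  refine LeOn.anti ?_ hw h
  rw [LeOn, ← inv_div, oneLePart_inv, inf_comm]
  exact oneLePart_inf_leOnePart_eq_one _

lemma le_of_pow {n : ℕ} (h : LeOn w (w ^ n) y) (hy : 1 ≤ y) : w ^ n ≤ y := by
  have hle : (w ^ n / y)⁺ᵐ ≤ w ^ n := by
    refine sup_le ?_ (one_le_pow_of_one_le' h.one_le n)
    rw [div_eq_mul_inv]
    exact mul_le_of_le_one_right' (inv_le_one'.2 hy)
  have hdisj : (w ^ n / y)⁺ᵐ ⊓ w ^ n = 1 := by
    rw [inf_comm]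
    exact pow_inf_eq_one (inf_comm (a := w) _ ▸ h) n
  rw [inf_eq_left.2 hle] at hdisj
  exact div_le_one'.1 (oneLePart_eq_one.1 hdisj)

lemma eq_one_of_forall_pow [IsIntegrallyClosedOrder G] (h : ∀ n : ℕ, LeOn w (w ^ n) y) :
    w = 1 := by
  refine le_antisymm ?_ (h 0).one_le
  refine IsIntegrallyClosedOrder.le_one_of_forall_pow_le w y⁺ᵐ fun n => ?_
  exact ((h n).trans_le (le_oneLePart y)).le_of_pow (one_le_oneLePart y)

variable [IsRepresentable G]

lemma mul_left (z : G) (h : LeOn w x y) : LeOn w (z * x) (z * y) := by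
  have hconj : z * x / (z * y) = z * (x / y) * z⁻¹ := by
    simp only [div_eq_mul_inv, mul_inv_rev, mul_assoc]
  rw [LeOn, hconj, oneLePart_conj]
  exact IsRepresentable.conj_inf_eq_one z h

lemma mul (h : LeOn w x y) (h' : LeOn w x' y') : LeOn w (x * x') (y * y') :=
  (h.mul_right x').trans (h'.mul_left y)

lemma pow (h : LeOn w x y) (n : ℕ) : LeOn w (x ^ n) (y ^ n) := by
  induction n with
  | zero => simpa only [pow_zero] using of_le h.one_le le_rfl
  | succ n ih => simpa only [pow_succ] using ih.mul h

lemma conj (g : G) (h : LeOn w x y) : LeOn w (g * x * g⁻¹) (g * y * g⁻¹) :=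
  (h.mul_left g).mul_right g⁻¹

lemma of_conj (g : G) (h : LeOn w (g * x * g⁻¹) (g * y * g⁻¹)) : LeOn w x y := by
  simpa [mul_assoc] using h.conj g⁻¹

end LeOn

section Commutator

variable [MulLeftMono G] [MulRightMono G] {a b w z : G}

section Representable

variable [IsRepresentable G]

lemma pow_commutator_mul_leOn (h : LeOn w ⁅b, a⁆ (b * ⁅b, a⁆ * b⁻¹)) (hbz : Commute b z)
    (haz : LeOn w a z) (n : ℕ) : LeOn w (⁅b, a⁆ ^ n * a) z := by
  induction n with
  | zero => simpa only [pow_zero, one_mul] using haz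
  | succ n ih =>
    have hconj : (b * ⁅b, a⁆ * b⁻¹) ^ n * (b * a * b⁻¹) = b * (⁅b, a⁆ ^ n * a) * b⁻¹ := by
      rw [conj_pow, conj_mul]
    have hz : b * z * b⁻¹ = z := by rw [hbz.eq, mul_inv_cancel_right]
    have hstep := (h.pow n).mul_right (b * a * b⁻¹)
    rw [hconj, ← commutatorElement_mul_eq_conj, ← mul_assoc, ← pow_succ] at hstep
    exact hz ▸ hstep.trans (ih.conj b)

lemma pow_commutator_leOn (h : LeOn w (b * ⁅b, a⁆ * b⁻¹) ⁅b, a⁆) (ha : LeOn w 1 a) (n : ℕ) :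
    LeOn w (⁅b, a⁆ ^ n) a := by
  induction n with
  | zero => simpa only [pow_zero] using ha
  | succ n ih =>
    refine .of_conj b ?_
    rw [← conj_pow, ← commutatorElement_mul_eq_conj b a, pow_succ']
    exact h.mul ((h.pow n).trans ih)

end Representable

variable [IsIntegrallyClosedOrder G]

-- If the commutator `c = ⁅b, a⁆` grows under conjugation by `b`, then `c ^ n * a` stays below every
-- power of `b` that exceeds `a`. So `b ^ m ≤ a` for all `m` where `1 < w`, whence `b = 1` there.
lemma eq_one_of_leOn_commutator (ha : 1 ≤ a) (hb : 1 ≤ b) (hw : LeOn w w ⁅b, a⁆)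
    (h : LeOn w ⁅b, a⁆ (b * ⁅b, a⁆ * b⁻¹)) : w = 1 := by
  have hpow (m : ℕ) : LeOn w (b ^ m) a := by
    have hy : 1 ≤ (b ^ m / a)⁺ᵐ ⊓ w := le_inf (one_le_oneLePart _) hw.one_le
    refine LeOn.eq_one_of_forall_pow (y := b ^ m) fun n => ?_
    have hle := pow_commutator_mul_leOn (h.anti hy inf_le_right) (Commute.self_pow b m)
      (.of_le_oneLePart_div hy inf_le_left) n
    exact ((hw.anti_self hy inf_le_right).pow n).trans
      ((LeOn.of_le hy (le_mul_of_one_le_right' ha)).trans hle)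
  have hb_le : LeOn w b 1 := by
    have hz : 1 ≤ b ⊓ w := le_inf hb hw.one_le
    rw [LeOn, div_one, oneLePart_eq_self.2 hb]
    exact LeOn.eq_one_of_forall_pow fun m =>
      (LeOn.of_le hz (pow_le_pow_left' inf_le_left m)).trans ((hpow m).anti hz inf_le_right)
  have hc_le : LeOn w ⁅b, a⁆ 1 := by
    have hinv : LeOn w (a * b⁻¹ * a⁻¹) 1 := by
      refine .of_le hw.one_le ?_
      simpa only [mul_one, mul_inv_cancel] using conj_le_conj a (inv_le_one'.2 hb)
    simpa only [commutatorElement_def, mul_assoc, mul_one] using hb_le.mul hinv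
  exact (hw.trans hc_le).eq_one

lemma commutator_le_one (ha : 1 ≤ a) (hb : 1 ≤ b) : ⁅b, a⁆ ≤ 1 := by
  set c := ⁅b, a⁆
  have hw : LeOn c⁺ᵐ c⁺ᵐ c := LeOn.oneLePart_self c
  have hconj : LeOn c⁺ᵐ (b * c * b⁻¹) c := by
    have hy : 1 ≤ (b * c * b⁻¹ / c)⁺ᵐ ⊓ c⁺ᵐ := le_inf (one_le_oneLePart _) (one_le_oneLePart c)
    exact eq_one_of_leOn_commutator ha hb (hw.anti_self hy inf_le_right)
      (.of_le_oneLePart_div hy inf_le_left)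
  refine oneLePart_eq_one.1 (LeOn.eq_one_of_forall_pow (y := a) fun n => ?_)
  exact (hw.pow n).trans (pow_commutator_leOn hconj (.of_le (one_le_oneLePart c) ha) n)

lemma commute_of_one_le (ha : 1 ≤ a) (hb : 1 ≤ b) : Commute a b := by
  refine commutatorElement_eq_one_iff_commute.1 (le_antisymm (commutator_le_one hb ha) ?_)
  rw [← commutatorElement_inv, one_le_inv']
  exact commutator_le_one ha hb

lemma commute (a b : G) : Commute a b := by
  have hpos {x : G} (hx : 1 ≤ x) : Commute x b := by
    rw [← oneLePart_div_leOnePart b, div_eq_mul_inv]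
    exact .mul_right (commute_of_one_le hx (one_le_oneLePart b))
      (commute_of_one_le hx (one_le_leOnePart b)).inv_right
  rw [← oneLePart_div_leOnePart a, div_eq_mul_inv]
  exact .mul_left (hpos (one_le_oneLePart a)) (hpos (one_le_leOnePart a)).inv_left

end Commutator

/-- A group whose order has binary joins is a lattice, because inversion reverses the order. -/
abbrev latticeOfSemilatticeSup {G : Type*} [Group G] [SemilatticeSup G] [MulLeftMono G]
    [MulRightMono G] : Lattice G where
  inf a b := (a⁻¹ ⊔ b⁻¹)⁻¹
  inf_le_left _ _ := inv_le_of_inv_le' le_sup_left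
  inf_le_right _ _ := inv_le_of_inv_le' le_sup_right
  le_inf _ _ _ hb hc := le_inv_of_le_inv (sup_le (inv_le_inv_iff.2 hb) (inv_le_inv_iff.2 hc))

end LatticeOrderedGroup

section Units

variable {M : Type*} [Monoid M] [Preorder M]

instance [MulLeftMono M] : MulLeftMono Mˣ :=
  ⟨fun u _ _ h => mul_le_mul_right (Units.val_le_val.2 h) u.1⟩

instance [MulRightMono M] : MulRightMono Mˣ :=
  ⟨fun u _ _ h => mul_le_mul_left (Units.val_le_val.2 h) u.1⟩

instance [IsIntegrallyClosedOrder M] : IsIntegrallyClosedOrder Mˣ where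
  le_one_of_forall_pow_le u v h :=
    IsIntegrallyClosedOrder.le_one_of_forall_pow_le u.1 v.1 fun n => by
      rw [← Units.val_pow_eq_pow_val]
      exact h n

end Units

section IdemSemiring

variable {K : Type*} [IdemSemiring K]

lemma isUnit_sup_of_forall_isUnit (hK : ∀ x : K, x ≠ 0 → IsUnit x) (u v : Kˣ) :
    IsUnit (u ⊔ v : K) := by
  by_cases h : (u ⊔ v : K) = 0
  · have hu : (u : K) = 0 := le_zero_iff.1 (h ▸ le_sup_left)
    rw [h, ← hu]
    exact u.isUnit
  · exact hK _ h

/-- The lattice-ordered group of units of an idempotent semiring whose nonzero elements are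
invertible; it consists of all nonzero elements unless the semiring is trivial. -/
noncomputable abbrev unitsLattice (hK : ∀ x : K, x ≠ 0 → IsUnit x) : Lattice Kˣ :=
  letI : SemilatticeSup Kˣ :=
    { sup u v := (isUnit_sup_of_forall_isUnit hK u v).unit
      le_sup_left _ _ := le_sup_left (α := K)
      le_sup_right _ _ := le_sup_right (α := K)
      sup_le _ _ _ := sup_le (α := K) }
  LatticeOrderedGroup.latticeOfSemilatticeSup

theorem commute_of_forall_isUnit [IsIntegrallyClosedOrder K] (hK : ∀ x : K, x ≠ 0 → IsUnit x)
    (x y : K) : Commute x y := by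
  rcases eq_or_ne x 0 with rfl | hx
  · exact .zero_left y
  rcases eq_or_ne y 0 with rfl | hy
  · exact .zero_right x
  obtain ⟨u, rfl⟩ := hK x hx
  obtain ⟨v, rfl⟩ := hK y hy
  let _ := unitsLattice hK
  exact (LatticeOrderedGroup.commute u v).units_val

end IdemSemiring

namespace IdemSemifield

variable {K : Type*} (F : IdemSemifield K)

/-- `F` as an idempotent semiring in the sense of Mathlib, with the same order. -/
abbrev toIdemSemiring : IdemSemiring K :=
  let _ : Semiring K :=
    { add := F.add
      add_assoc := F.add_assoc
      zero := F.zero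
      zero_add := F.zero_add
      add_zero x := (F.add_comm x F.zero).trans (F.zero_add x)
      add_comm := F.add_comm
      mul := F.mul
      left_distrib := F.left_distrib
      right_distrib := F.right_distrib
      zero_mul := F.zero_mul
      mul_zero := F.mul_zero
      mul_assoc := F.mul_assoc
      one := F.one
      one_mul := F.one_mul
      mul_one := F.mul_one
      nsmul := @nsmulRec K ⟨F.zero⟩ ⟨F.add⟩ }
  .ofSemiring F.add_idem

lemma isUnit_of_ne_zero (x : K) (hx : x ≠ F.zero) :
    let _ := F.toIdemSemiring
    IsUnit x :=
  let _ := F.toIdemSemiring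
  let ⟨y, hxy, hyx⟩ := F.inv_exists x hx
  ⟨⟨x, y, hxy, hyx⟩, rfl⟩

lemma pow_eq_npow (x : K) (n : ℕ) :
    let _ := F.toIdemSemiring
    F.pow x n = x ^ n := by
  intro _
  induction n with
  | zero => exact (pow_zero x).symm
  | succ n ih => exact (congrArg (F.mul x) ih).trans (pow_succ' x n).symm

variable {F}

lemma le_one_of_forall_pow_le (hF : F.BComplete) (x y : K) (h : ∀ n : ℕ, F.le (F.pow x n) y) :
    F.le x F.one := by
  let _ := F.toIdemSemiring
  obtain ⟨s, hs_ub, hs_least⟩ := hF (Set.range (F.pow x)) ⟨y, Set.forall_mem_range.2 h⟩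
  have hs : IsLUB (Set.range (x ^ · : ℕ → K)) s := by
    simp only [← F.pow_eq_npow]
    exact ⟨hs_ub, hs_least⟩
  have hxs : x ≤ s := pow_one x ▸ hs.1 ⟨1, rfl⟩
  rcases eq_or_ne x 0 with rfl | hx
  · exact bot_le (α := K)
  · refine le_one_of_isLUB_range_pow (F.isUnit_of_ne_zero x hx) (F.isUnit_of_ne_zero s ?_) hs
    rintro rfl
    exact hx (le_bot_iff.1 hxs)

end IdemSemifield

theorem stmt5_general {K : Type*} (F : IdemSemifield K)
    (hF : ∀ x y, (∀ n : ℕ, F.le (F.pow x n) y) → F.le x F.one) :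
    ∀ x y, F.mul x y = F.mul y x := by
  let _ := F.toIdemSemiring
  have : IsIntegrallyClosedOrder K := ⟨fun x y h => hF x y fun n => F.pow_eq_npow x n ▸ h n⟩
  exact commute_of_forall_isUnit F.isUnit_of_ne_zero

/-- Every b-complete idempotent semifield is commutative under multiplication. -/
theorem stmt5 {K : Type*} (F : IdemSemifield K) (hb : F.BComplete) :
    ∀ x y, F.mul x y = F.mul y x :=
  stmt5_general F (IdemSemifield.le_one_of_forall_pow_le hb)
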